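/- arXiv:2412.14267 — 3 statements merged into one kernel-verified Lean document; each statement's English description precedes it below -/
import Mathlib

section
/- Assume (D₂⁺) and fix γ ≥ 2/(1−β). For h > 0 set x_h := −h^{−γ}/b(h^{−γ}) and, for x > x_h, define F(h,x) := b(b(h^{−γ})·x + h^{−γ})/b(h^{−γ}). Then for every fixed x ∈ ℝ: (i) lim_{h→0⁺} ∂_x F(h,x) = 0, where ∂_x F(h,x) = b′(b(h^{−γ})·x + h^{−γ}); and (ii) lim_{h→0⁺} ∂_h F(h,x) = 0. (For each fixed x one has x > x_h for all sufficiently small h > 0, so these derivatives are eventually defined; consequently F, extended by F(h,x) := 1 for h ≤ 0, is C¹ on {(h,x) : h ≤ 0, or h > 0 and x > x_h}.) -/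
open Filter Topology

/-!
In the variable `y = h ^ (-γ) → ∞`, `F` is the ratio `b z / b y` with `z = b y * x + y`. Since
`b y = o(y)`, `z` is equivalent to `y`, so on the segment between them `b'` and `b''` have orders
`y ^ (β - 1)` and `y ^ (β - 2)`. The mean value theorem then gives `b z / b y → 1` and
`∂F/∂y = O(y ^ (β - 2))`, while `dy/dh` is of order `y ^ (1 + 1/γ)`; so `∂F/∂h → 0` as soon as
`γ > 1 / (1 - β)`. Everything is uniform for bounded `x`, so `F` and its Fréchet derivative have the
limits `1` and `0` at every point of `{h = 0}`, and `F` glues to the constant `1` in a `C¹` way.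
-/

open Asymptotics

section Asymptotics

variable {α : Type*} {l : Filter α} {u v : α → ℝ}

lemma isLittleO_rpow_of_tendsto_div {g : ℝ → ℝ} {s t : ℝ} (hst : s ≤ t)
    (hg : Tendsto (fun x : ℝ => g x / x ^ s) atTop (𝓝 0)) :
    g =o[atTop] fun x => x ^ t := by
  have hgs : g =o[atTop] fun x => x ^ s := by
    refine (isLittleO_iff_tendsto' ?_).2 hg
    filter_upwards [eventually_gt_atTop 0] with x hx h0
    exact absurd h0 (Real.rpow_pos_of_pos hx s).ne'
  refine hgs.trans_isBigO (.of_norm_eventuallyLE ?_)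
  filter_upwards [eventually_ge_atTop 1] with x hx
  rw [Real.norm_of_nonneg (by positivity)]
  exact Real.rpow_le_rpow_of_exponent_le hx hst

lemma isTheta_const_mul_rpow_add {g : ℝ → ℝ} {a s : ℝ} (ha : a ≠ 0)
    (hg : g =o[atTop] fun x => x ^ s) :
    (fun x => a * x ^ s + g x) =Θ[atTop] fun x => x ^ s := by
  have hmain : (fun x : ℝ => a * x ^ s) =Θ[atTop] fun x => x ^ s :=
    (isTheta_refl _ _).const_mul_left ha
  have := (hg.trans_isTheta hmain.symm).right_isTheta_add
  exact (this.trans_eventuallyEq (.of_forall fun x => add_comm (g x) _)).symm.trans hmain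

lemma isBigO_mul_rpow_comp (hu : Tendsto u l atTop) {f g : α → ℝ} {s t : ℝ}
    (hf : f =O[l] fun a => u a ^ s) (hg : g =O[l] fun a => u a ^ t) :
    (fun a => f a * g a) =O[l] fun a => u a ^ (s + t) := by
  refine (hf.mul hg).congr' .rfl ?_
  filter_upwards [hu.eventually_gt_atTop 0] with a ha
  exact (Real.rpow_add ha s t).symm

lemma tendsto_zero_of_isBigO_rpow (hu : Tendsto u l atTop) {f : α → ℝ} {s : ℝ} (hs : s < 0)
    (hf : f =O[l] fun a => u a ^ s) : Tendsto f l (𝓝 0) := by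
  refine hf.trans_tendsto ?_
  simpa only [neg_neg, Function.comp_def] using (tendsto_rpow_neg_atTop (neg_pos.2 hs)).comp hu

lemma isBigO_comp_rpow_of_isEquivalent (hu : Tendsto u l atTop) (huv : v ~[l] u) {g : ℝ → ℝ}
    {s : ℝ} (hg : g =O[atTop] fun t => t ^ s) : (fun a => g (v a)) =O[l] fun a => u a ^ s := by
  have hv : Tendsto v l atTop := huv.symm.tendsto_atTop hu
  exact (hg.comp_tendsto hv).trans
    (huv.isTheta.rpow (hv.eventually_ge_atTop 0) (hu.eventually_ge_atTop 0)).1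

lemma exists_mem_uIcc_sub_eq_mul_sub {g g' : ℝ → ℝ} {s t : ℝ}
    (hg : ∀ r ∈ Set.uIcc s t, HasDerivAt g (g' r) r) :
    ∃ r ∈ Set.uIcc s t, g t - g s = g' r * (t - s) := by
  obtain ⟨r, hr, h⟩ := domain_mvt (f := g) (s := Set.uIcc s t)
    (fun r hr => (hg r hr).hasFDerivAt.hasFDerivWithinAt) (convex_uIcc s t)
    Set.left_mem_uIcc Set.right_mem_uIcc
  exact ⟨r, segment_eq_uIcc s t ▸ hr, by simpa [mul_comm] using h⟩

-- The mean value point lies between `u` and `v`, hence is itself equivalent to `u`.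
lemma isBigO_sub_of_isEquivalent (hu : Tendsto u l atTop) (huv : v ~[l] u) {g g' : ℝ → ℝ} {s : ℝ}
    (hg : ∀ᶠ t in atTop, HasDerivAt g (g' t) t) (hg' : g' =O[atTop] fun t => t ^ s) :
    (fun a => g (v a) - g (u a)) =O[l] fun a => u a ^ s * (v a - u a) := by
  rcases l.eq_or_neBot with rfl | _
  · exact isBigO_bot _ _
  have hmvt : ∀ᶠ a in l, ∃ r, |r - u a| ≤ |v a - u a| ∧
      g (v a) - g (u a) = g' r * (v a - u a) := by
    obtain ⟨T, hT⟩ := eventually_atTop.1 hg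
    filter_upwards [hu.eventually_ge_atTop T,
      (huv.symm.tendsto_atTop hu).eventually_ge_atTop T] with a hua hva
    obtain ⟨r, hr, h⟩ := exists_mem_uIcc_sub_eq_mul_sub (s := u a) (t := v a)
      fun r hr => hT r ((le_min hua hva).trans hr.1)
    exact ⟨r, Set.abs_sub_left_of_mem_uIcc hr, h⟩
  obtain ⟨w, hw⟩ := hmvt.choice
  have hwu : w ~[l] u :=
    (IsBigO.of_bound' (hw.mono fun a ha => ha.1)).trans_isLittleO huv
  exact ((isBigO_comp_rpow_of_isEquivalent hu hwu hg').mul (isBigO_refl _ l)).congr'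
    (hw.mono fun a ha => ha.2.symm) .rfl

end Asymptotics

section Gluing

lemma nhdsGT_zero_prod_eq {X : Type*} [TopologicalSpace X] (x : X) :
    𝓝[>] (0 : ℝ) ×ˢ 𝓝 x = 𝓝[Set.Ioi 0 ×ˢ Set.univ] (0, x) := by
  rw [nhdsWithin_prod_eq, nhdsWithin_univ]

lemma nhds_zero_prod_eq_sup {X : Type*} [TopologicalSpace X] (x : X) :
    𝓝 ((0 : ℝ), x) = 𝓝[Set.Iic 0 ×ˢ Set.univ] (0, x) ⊔ 𝓝[>] (0 : ℝ) ×ˢ 𝓝 x := by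
  rw [nhdsWithin_prod_eq, nhdsWithin_univ, ← Filter.sup_prod, nhdsLE_sup_nhdsGT, nhds_prod_eq]

lemma contDiffAt_one_of_eventually {𝕜 E G : Type*} [NontriviallyNormedField 𝕜]
    [NormedAddCommGroup E] [NormedSpace 𝕜 E] [NormedAddCommGroup G] [NormedSpace 𝕜 G] {f : E → G}
    {x : E} (hf : ∀ᶠ y in 𝓝 x, DifferentiableAt 𝕜 f y ∧ ContinuousAt (fderiv 𝕜 f) y) :
    ContDiffAt 𝕜 1 f x :=
  contDiffAt_one_iff.2 ⟨fderiv 𝕜 f, _, hf, fun _ hy => hy.2.continuousWithinAt,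
    fun _ hy => hy.1.hasFDerivAt⟩

variable {E G : Type*} [NormedAddCommGroup E] [NormedSpace ℝ E] [NormedAddCommGroup G]
  [NormedSpace ℝ G] {F : ℝ × E → G} {c : G}

lemma hasFDerivWithinAt_Ioi_prod_univ_of_tendsto_fderiv {F' : ℝ × E →L[ℝ] G}
    (hF : ∀ x, Tendsto F (𝓝[>] 0 ×ˢ 𝓝 x) (𝓝 (F (0, x)))) {x : E}
    (hdiff : ∀ᶠ p in 𝓝[>] (0 : ℝ) ×ˢ 𝓝 x, DifferentiableAt ℝ F p)
    (hF' : Tendsto (fderiv ℝ F) (𝓝[>] 0 ×ˢ 𝓝 x) (𝓝 F')) :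
    HasFDerivWithinAt F F' (Set.Ioi 0 ×ˢ Set.univ) (0, x) := by
  rw [nhdsGT_zero_prod_eq] at hdiff hF'
  obtain ⟨ε, hε, hball⟩ := Metric.mem_nhdsWithin_iff.1 hdiff
  set s : Set (ℝ × E) := Metric.ball (0, x) (ε / 2) ∩ Set.Ioi 0 ×ˢ Set.univ
  have hs_diff : ∀ p ∈ Metric.closedBall ((0 : ℝ), x) (ε / 2), 0 < p.1 →
      DifferentiableAt ℝ F p := fun p hp hp0 =>
    hball ⟨Metric.closedBall_subset_ball (by linarith) hp, hp0, trivial⟩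
  have hs_cont : ∀ p ∈ closure s, ContinuousWithinAt F s p := by
    intro p hp
    have hp_ball : p ∈ Metric.closedBall ((0 : ℝ), x) (ε / 2) :=
      Metric.closure_ball_subset_closedBall (closure_mono Set.inter_subset_left hp)
    have hp_nonneg : 0 ≤ p.1 := closure_minimal (t := {q : ℝ × E | 0 ≤ q.1})
      (fun q hq => (Set.mem_Ioi.1 hq.2.1).le) (isClosed_le continuous_const continuous_fst) hp
    rcases hp_nonneg.eq_or_lt with hp0 | hp0
    · obtain ⟨h, y⟩ := p
      obtain rfl : 0 = h := hp0
      exact (hF y).mono_left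
        (nhdsGT_zero_prod_eq y ▸ nhdsWithin_mono _ Set.inter_subset_right)
    · exact (hs_diff p hp_ball hp0).continuousAt.continuousWithinAt
  have hpos_isOpen : IsOpen (Set.Ioi (0 : ℝ) ×ˢ (Set.univ : Set E)) :=
    isOpen_Ioi.prod isOpen_univ
  have hmain : HasFDerivWithinAt F F' (closure s) (0, x) :=
    hasFDerivWithinAt_closure_of_tendsto_fderiv
      (fun p hp => (hs_diff p (Metric.ball_subset_closedBall hp.1) hp.2.1).differentiableWithinAt)
      ((convex_ball _ _).inter ((convex_Ioi 0).prod convex_univ))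
      (Metric.isOpen_ball.inter hpos_isOpen) hs_cont
      (hF'.mono_left (nhdsWithin_mono _ Set.inter_subset_right))
  refine (hmain.mono subset_closure).mono_of_mem_nhdsWithin ?_
  exact Filter.inter_mem (mem_nhdsWithin_of_mem_nhds (Metric.ball_mem_nhds _ (by positivity)))
    self_mem_nhdsWithin

lemma hasFDerivAt_zero_of_fst_nonpos (hneg : ∀ p : ℝ × E, p.1 ≤ 0 → F p = c)
    (hdiff : ∀ x, ∀ᶠ p in 𝓝[>] (0 : ℝ) ×ˢ 𝓝 x, DifferentiableAt ℝ F p)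
    (hF : ∀ x, Tendsto F (𝓝[>] 0 ×ˢ 𝓝 x) (𝓝 c))
    (hF' : ∀ x, Tendsto (fderiv ℝ F) (𝓝[>] 0 ×ˢ 𝓝 x) (𝓝 0)) {p : ℝ × E} (hp : p.1 ≤ 0) :
    HasFDerivAt F (0 : ℝ × E →L[ℝ] G) p := by
  rcases hp.lt_or_eq with hp0 | hp0
  · refine (hasFDerivAt_const c p).congr_of_eventuallyEq ?_
    filter_upwards [continuousAt_fst.eventually_lt_const hp0] with q hq using hneg q hq.le
  · obtain ⟨h, x⟩ := p
    obtain rfl : h = 0 := hp0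
    have hleft : HasFDerivWithinAt F (0 : ℝ × E →L[ℝ] G) (Set.Iic 0 ×ˢ Set.univ) (0, x) :=
      (hasFDerivWithinAt_const c _ _).congr (fun q hq => hneg q hq.1) (hneg _ le_rfl)
    have hright := hasFDerivWithinAt_Ioi_prod_univ_of_tendsto_fderiv
      (fun y => (hneg (0, y) le_rfl).symm ▸ hF y) (hdiff x) (hF' x)
    have hunion := hleft.union hright
    rwa [← Set.union_prod, Set.Iic_union_Ioi, Set.univ_prod_univ,
      hasFDerivWithinAt_univ] at hunion

lemma continuousAt_fderiv_of_fst_nonpos (hneg : ∀ p : ℝ × E, p.1 ≤ 0 → F p = c)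
    (hdiff : ∀ x, ∀ᶠ p in 𝓝[>] (0 : ℝ) ×ˢ 𝓝 x, DifferentiableAt ℝ F p)
    (hF : ∀ x, Tendsto F (𝓝[>] 0 ×ˢ 𝓝 x) (𝓝 c))
    (hF' : ∀ x, Tendsto (fderiv ℝ F) (𝓝[>] 0 ×ˢ 𝓝 x) (𝓝 0)) {p : ℝ × E} (hp : p.1 ≤ 0) :
    ContinuousAt (fderiv ℝ F) p := by
  have hzero : ∀ q : ℝ × E, q.1 ≤ 0 → fderiv ℝ F q = 0 := fun q hq =>
    (hasFDerivAt_zero_of_fst_nonpos hneg hdiff hF hF' hq).fderiv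
  rw [ContinuousAt, hzero p hp]
  rcases hp.lt_or_eq with hp0 | hp0
  · refine tendsto_const_nhds.congr' ?_
    filter_upwards [continuousAt_fst.eventually_lt_const hp0] with q hq using (hzero q hq.le).symm
  · obtain ⟨h, x⟩ := p
    obtain rfl : h = 0 := hp0
    rw [nhds_zero_prod_eq_sup]
    refine Tendsto.sup (tendsto_const_nhds.congr' ?_) (hF' x)
    filter_upwards [self_mem_nhdsWithin] with q hq using (hzero q hq.1).symm

theorem contDiffAt_one_of_fst_nonpos (hneg : ∀ p : ℝ × E, p.1 ≤ 0 → F p = c)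
    (hpos : ∀ x, ∀ᶠ p in 𝓝[>] (0 : ℝ) ×ˢ 𝓝 x, ContDiffAt ℝ 1 F p)
    (hF : ∀ x, Tendsto F (𝓝[>] 0 ×ˢ 𝓝 x) (𝓝 c))
    (hF' : ∀ x, Tendsto (fderiv ℝ F) (𝓝[>] 0 ×ˢ 𝓝 x) (𝓝 0)) {p : ℝ × E} (hp : p.1 ≤ 0) :
    ContDiffAt ℝ 1 F p := by
  have hdiff : ∀ x, ∀ᶠ q in 𝓝[>] (0 : ℝ) ×ˢ 𝓝 x, DifferentiableAt ℝ F q := fun x =>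
    (hpos x).mono fun q hq => hq.differentiableAt one_ne_zero
  have hnear : ∀ᶠ q in 𝓝 p, q.1 ≤ 0 ∨ ContDiffAt ℝ 1 F q := by
    rcases hp.lt_or_eq with hp0 | hp0
    · exact (continuousAt_fst.eventually_lt_const hp0).mono fun q hq => .inl hq.le
    · obtain ⟨h, x⟩ := p
      obtain rfl : h = 0 := hp0
      rw [nhds_zero_prod_eq_sup]
      exact Filter.eventually_sup.2
        ⟨eventually_mem_nhdsWithin.mono fun q hq => .inl hq.1, (hpos x).mono fun q => .inr⟩
  refine contDiffAt_one_of_eventually (hnear.mono ?_)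
  rintro q (hq | hq)
  · exact ⟨(hasFDerivAt_zero_of_fst_nonpos hneg hdiff hF hF' hq).differentiableAt,
      continuousAt_fderiv_of_fst_nonpos hneg hdiff hF hF' hq⟩
  · exact ⟨hq.differentiableAt one_ne_zero, (hq.fderiv_right (m := 0) (by norm_num)).continuousAt⟩

end Gluing

/-- `b` behaves like `x ^ β` at infinity in the `C²` sense: it is positive on `(0, ∞)`, where `b'`
and `b''` are its first two derivatives, it is of exact order `x ^ β`, and each derivative
loses one power. -/
structure HasPowerGrowth (β : ℝ) (b b' b'' : ℝ → ℝ) : Prop where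
  pos : ∀ t, 0 < t → 0 < b t
  hasDerivAt : ∀ t, 0 < t → HasDerivAt b (b' t) t
  hasDerivAt_deriv : ∀ t, 0 < t → HasDerivAt b' (b'' t) t
  isTheta : b =Θ[atTop] fun t => t ^ β
  isBigO_deriv : b' =O[atTop] fun t => t ^ (β - 1)
  isBigO_deriv_deriv : b'' =O[atTop] fun t => t ^ (β - 2)

/-- The function `F` in the variable `y = h ^ (-γ)`. -/
noncomputable def rescaled (b : ℝ → ℝ) (y x : ℝ) : ℝ :=
  b (b y * x + y) / b y

/-- The partial derivative of `rescaled b y x` in `y`, given the derivative `b'` of `b`. -/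
noncomputable def rescaledDeriv (b b' : ℝ → ℝ) (y x : ℝ) : ℝ :=
  (b' (b y * x + y) * (b' y * x + 1) * b y - b (b y * x + y) * b' y) / b y ^ 2

/-- The function `F`, extended by `1` to `h ≤ 0`, as a function of the pair `(h, x)`. -/
noncomputable def extendedRescaled (γ : ℝ) (b : ℝ → ℝ) (p : ℝ × ℝ) : ℝ :=
  if p.1 ≤ 0 then 1 else rescaled b (p.1 ^ (-γ)) p.2

lemma extendedRescaled_eventuallyEq {γ : ℝ} {b : ℝ → ℝ} {p : ℝ × ℝ} (hp : 0 < p.1) :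
    extendedRescaled γ b =ᶠ[𝓝 p] fun q => rescaled b (q.1 ^ (-γ)) q.2 := by
  filter_upwards [continuousAt_fst.eventually_const_lt hp] with q hq using if_neg hq.not_ge

namespace HasPowerGrowth

variable {α : Type*} {l : Filter α} {y x : α → ℝ} {β γ : ℝ} {b b' b'' : ℝ → ℝ}

lemma of_eq_rpow_add {f f' f'' : ℝ → ℝ} {a : ℝ} (ha : a ≠ 0) (hpos : ∀ t, 0 < t → 0 < b t)
    (hb' : ∀ t, 0 < t → HasDerivAt b (b' t) t) (hbf : ∀ t, 0 < t → b t = a * t ^ β + f t)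
    (hf' : ∀ t, 0 < t → HasDerivAt f (f' t) t) (hf'' : ∀ t, 0 < t → HasDerivAt f' (f'' t) t)
    (hfo : f =o[atTop] fun t => t ^ β) (hf'o : f' =O[atTop] fun t => t ^ (β - 1))
    (hf''o : f'' =O[atTop] fun t => t ^ (β - 2)) :
    HasPowerGrowth β b b' fun t => a * (β * ((β - 1) * t ^ (β - 2))) + f'' t := by
  have hb'_eq : ∀ t, 0 < t → b' t = a * (β * t ^ (β - 1)) + f' t := by
    intro t ht
    have hpow := Real.hasDerivAt_rpow_const (x := t) (p := β) (.inl ht.ne')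
    exact (hb' t ht).unique <|
      ((hpow.const_mul a).add (hf' t ht)).congr_of_eventuallyEq ((lt_mem_nhds ht).mono hbf)
  refine ⟨hpos, hb', fun t ht => ?_, ?_, ?_, ?_⟩
  · have hpow := Real.hasDerivAt_rpow_const (x := t) (p := β - 1) (.inl ht.ne')
    rw [show β - 1 - 1 = β - 2 by ring] at hpow
    exact (((hpow.const_mul β).const_mul a).add (hf'' t ht)).congr_of_eventuallyEq
      ((lt_mem_nhds ht).mono hb'_eq)
  · exact EventuallyEq.trans_isTheta ((eventually_gt_atTop 0).mono hbf)
      (isTheta_const_mul_rpow_add ha hfo)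
  · exact EventuallyEq.trans_isBigO ((eventually_gt_atTop 0).mono hb'_eq)
      ((((isBigO_refl _ _).const_mul_left β).const_mul_left a).add hf'o)
  · exact ((((isBigO_refl _ _).const_mul_left (β - 1)).const_mul_left β).const_mul_left a).add hf''o

variable (hb : HasPowerGrowth β b b' b'')
include hb

lemma contDiffAt {t : ℝ} (ht : 0 < t) : ContDiffAt ℝ 1 b t := by
  refine contDiffAt_one_iff.2 ⟨fun s => .toSpanSingleton ℝ (b' s), Set.Ioi 0, Ioi_mem_nhds ht,
    ?_, fun s hs => (hb.hasDerivAt s hs).hasFDerivAt⟩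
  have hb'_cont : ContinuousOn b' (Set.Ioi 0) := fun s hs =>
    (hb.hasDerivAt_deriv s hs).continuousAt.continuousWithinAt
  exact ContinuousLinearMap.toSpanSingletonCLE.continuous.comp_continuousOn hb'_cont

lemma isLittleO_id (hβ : β < 1) : b =o[atTop] id := by
  refine hb.isTheta.trans_isLittleO ?_
  refine (isLittleO_iff_tendsto' ?_).2 ?_
  · filter_upwards [eventually_gt_atTop 0] with t ht h0 using absurd h0 ht.ne'
  · refine (tendsto_zero_of_isBigO_rpow tendsto_id (sub_neg.2 hβ) (isBigO_refl _ _)).congr' ?_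
    filter_upwards [eventually_gt_atTop 0] with t ht using Real.rpow_sub_one ht.ne' β

lemma isBigO_inv : (fun t => (b t)⁻¹) =O[atTop] fun t => t ^ (-β) := by
  refine hb.isTheta.inv.isBigO.trans_eventuallyEq ?_
  filter_upwards [eventually_ge_atTop 0] with t ht using (Real.rpow_neg ht β).symm

lemma isBigO_deriv_div : (fun t => b' t / b t) =O[atTop] fun t => t ^ (-1 : ℝ) := by
  simpa only [div_eq_mul_inv, id, show β - 1 + -β = -1 by ring] using
    isBigO_mul_rpow_comp tendsto_id hb.isBigO_deriv hb.isBigO_inv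

lemma isEquivalent_mul_add (hβ : β < 1) (hy : Tendsto y l atTop) (hx : x =O[l] fun _ => (1 : ℝ)) :
    (fun a => b (y a) * x a + y a) ~[l] y := by
  have : (fun a => b (y a) * x a) =o[l] y := by
    simpa using ((hb.isLittleO_id hβ).comp_tendsto hy).mul_isBigO hx
  exact this.add_isEquivalent .refl

lemma isBigO_mul_add_sub_div (hβ : β < 1) (hy : Tendsto y l atTop) (hx : x =O[l] fun _ => (1 : ℝ))
    {g g' : ℝ → ℝ} {s : ℝ} (hg : ∀ᶠ t in atTop, HasDerivAt g (g' t) t)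
    (hg' : g' =O[atTop] fun t => t ^ s) :
    (fun a => (g (b (y a) * x a + y a) - g (y a)) / b (y a)) =O[l] fun a => y a ^ s := by
  have hmvt := isBigO_sub_of_isEquivalent hy (hb.isEquivalent_mul_add hβ hy hx) hg hg'
  have hdiv := (hmvt.mul (isBigO_refl (fun a => (b (y a))⁻¹) l)).trans_eventuallyEq
    (g₂ := fun a => y a ^ s * x a) <| by
      filter_upwards [hy.eventually_gt_atTop 0] with a ha
      have := (hb.pos _ ha).ne'
      field_simp
      ring
  simpa only [div_eq_mul_inv, mul_one] using hdiv.trans ((isBigO_refl _ l).mul hx)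

lemma tendsto_deriv_mul_add (hβ : β < 1) (hy : Tendsto y l atTop)
    (hx : x =O[l] fun _ => (1 : ℝ)) :
    Tendsto (fun a => b' (b (y a) * x a + y a)) l (𝓝 0) :=
  tendsto_zero_of_isBigO_rpow hy (sub_neg.2 hβ) <|
    isBigO_comp_rpow_of_isEquivalent hy (hb.isEquivalent_mul_add hβ hy hx) hb.isBigO_deriv

lemma tendsto_rescaled (hβ : β < 1) (hy : Tendsto y l atTop) (hx : x =O[l] fun _ => (1 : ℝ)) :
    Tendsto (fun a => rescaled b (y a) (x a)) l (𝓝 1) := by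
  rw [← tendsto_sub_nhds_zero_iff]
  refine (tendsto_zero_of_isBigO_rpow hy (sub_neg.2 hβ)
    (hb.isBigO_mul_add_sub_div hβ hy hx ((eventually_gt_atTop 0).mono hb.hasDerivAt)
    hb.isBigO_deriv)).congr' ?_
  filter_upwards [hy.eventually_gt_atTop 0] with a ha
  rw [rescaled, sub_div, div_self (hb.pos _ ha).ne']

lemma rescaledDeriv_eq {y : ℝ} (hy : 0 < y) (x : ℝ) :
    rescaledDeriv b b' y x = (b' (b y * x + y) - b' y) / b y +
      b' y / b y * (b' (b y * x + y) * x - (b (b y * x + y) - b y) / b y) := by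
  have := (hb.pos y hy).ne'
  rw [rescaledDeriv]
  field_simp
  ring

lemma isBigO_rescaledDeriv (hβ : β < 1) (hy : Tendsto y l atTop)
    (hx : x =O[l] fun _ => (1 : ℝ)) :
    (fun a => rescaledDeriv b b' (y a) (x a)) =O[l] fun a => y a ^ (β - 2) := by
  have hdiff' := hb.isBigO_mul_add_sub_div hβ hy hx
    ((eventually_gt_atTop 0).mono hb.hasDerivAt_deriv) hb.isBigO_deriv_deriv
  have hdiff := hb.isBigO_mul_add_sub_div hβ hy hx ((eventually_gt_atTop 0).mono hb.hasDerivAt)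
    hb.isBigO_deriv
  have hderiv : (fun a => b' (b (y a) * x a + y a) * x a) =O[l] fun a => y a ^ (β - 1) := by
    simpa only [mul_one] using (isBigO_comp_rpow_of_isEquivalent hy
      (hb.isEquivalent_mul_add hβ hy hx) hb.isBigO_deriv).mul hx
  have hlog := isBigO_mul_rpow_comp hy (hb.isBigO_deriv_div.comp_tendsto hy) (hderiv.sub hdiff)
  rw [show -1 + (β - 1) = β - 2 by ring] at hlog
  refine EventuallyEq.trans_isBigO ?_ (hdiff'.add hlog)
  filter_upwards [hy.eventually_gt_atTop 0] with a ha using hb.rescaledDeriv_eq ha (x a)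

lemma neg_div_lt_iff {y : ℝ} (hy : 0 < y) {x : ℝ} : -y / b y < x ↔ 0 < b y * x + y := by
  rw [div_lt_iff₀ (hb.pos y hy), neg_lt_iff_pos_add, mul_comm]

lemma hasFDerivAt_rescaled {p : ℝ × ℝ} (hy : 0 < p.1) (hz : 0 < b p.1 * p.2 + p.1) :
    HasFDerivAt (fun q : ℝ × ℝ => rescaled b q.1 q.2)
      (rescaledDeriv b b' p.1 p.2 • ContinuousLinearMap.fst ℝ ℝ ℝ +
        b' (b p.1 * p.2 + p.1) • ContinuousLinearMap.snd ℝ ℝ ℝ) p := by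
  have hby := (hb.pos _ hy).ne'
  have hfst : HasFDerivAt Prod.fst (ContinuousLinearMap.fst ℝ ℝ ℝ) p := hasFDerivAt_fst
  have hsnd : HasFDerivAt Prod.snd (ContinuousLinearMap.snd ℝ ℝ ℝ) p := hasFDerivAt_snd
  have hden := (hb.hasDerivAt _ hy).comp_hasFDerivAt p hfst
  have hnum := (hb.hasDerivAt _ hz).comp_hasFDerivAt p ((hden.mul hsnd).add hfst)
  have hinv := (hasDerivAt_inv hby).comp_hasFDerivAt p hden
  refine (hnum.mul hinv).congr_fderiv ?_
  refine ContinuousLinearMap.ext fun v => ?_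
  simp only [rescaledDeriv, Function.comp_apply, Pi.add_apply, Pi.mul_apply, add_apply, smul_apply,
    ContinuousLinearMap.coe_fst', ContinuousLinearMap.coe_snd', smul_eq_mul]
  field_simp
  ring

lemma hasFDerivAt_rescaled_rpow {p : ℝ × ℝ} (hp : 0 < p.1)
    (hz : 0 < b (p.1 ^ (-γ)) * p.2 + p.1 ^ (-γ)) :
    HasFDerivAt (fun q : ℝ × ℝ => rescaled b (q.1 ^ (-γ)) q.2)
      ((rescaledDeriv b b' (p.1 ^ (-γ)) p.2 * (-γ * p.1 ^ (-γ - 1))) •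
          ContinuousLinearMap.fst ℝ ℝ ℝ +
        b' (b (p.1 ^ (-γ)) * p.2 + p.1 ^ (-γ)) • ContinuousLinearMap.snd ℝ ℝ ℝ) p := by
  have hfst : HasFDerivAt Prod.fst (ContinuousLinearMap.fst ℝ ℝ ℝ) p := hasFDerivAt_fst
  have hsnd : HasFDerivAt Prod.snd (ContinuousLinearMap.snd ℝ ℝ ℝ) p := hasFDerivAt_snd
  have hpow : HasFDerivAt (fun q : ℝ × ℝ => (q.1 ^ (-γ), q.2)) _ p :=
    ((Real.hasDerivAt_rpow_const (p := -γ) (.inl hp.ne')).comp_hasFDerivAt p hfst).prodMk hsnd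
  refine ((hb.hasFDerivAt_rescaled (p := (p.1 ^ (-γ), p.2)) (Real.rpow_pos_of_pos hp _)
    hz).comp p hpow).congr_fderiv ?_
  ext <;> simp

lemma hasDerivAt_rescaled_rpow {h x : ℝ} (hh : 0 < h) (hz : 0 < b (h ^ (-γ)) * x + h ^ (-γ)) :
    HasDerivAt (fun h' => rescaled b (h' ^ (-γ)) x)
      (rescaledDeriv b b' (h ^ (-γ)) x * (-γ * h ^ (-γ - 1))) h := by
  have hcurve : HasDerivAt (fun h' : ℝ => (h', x)) (1, 0) h :=
    (hasDerivAt_id h).prodMk (hasDerivAt_const h x)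
  have hcomp := (hb.hasFDerivAt_rescaled_rpow (p := (h, x)) hh hz).comp_hasDerivAt h hcurve
  exact hcomp.congr_deriv (by simp)

lemma contDiffAt_extendedRescaled {p : ℝ × ℝ} (hp : 0 < p.1)
    (hz : 0 < b (p.1 ^ (-γ)) * p.2 + p.1 ^ (-γ)) :
    ContDiffAt ℝ 1 (extendedRescaled γ b) p := by
  have hy : 0 < p.1 ^ (-γ) := Real.rpow_pos_of_pos hp _
  have hpow : ContDiffAt ℝ 1 (fun q : ℝ × ℝ => q.1 ^ (-γ)) p :=
    contDiffAt_fst.rpow_const_of_ne hp.ne'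
  have hden : ContDiffAt ℝ 1 (fun q : ℝ × ℝ => b (q.1 ^ (-γ))) p := (hb.contDiffAt hy).comp p hpow
  have hnum : ContDiffAt ℝ 1 (fun q : ℝ × ℝ => b (b (q.1 ^ (-γ)) * q.2 + q.1 ^ (-γ))) p :=
    (hb.contDiffAt hz).comp p ((hden.mul contDiffAt_snd).add hpow)
  exact (hnum.div hden (hb.pos _ hy).ne').congr_of_eventuallyEq (extendedRescaled_eventuallyEq hp)

lemma tendsto_rescaledDeriv_rpow (hβ : β < 1) (hγ : 1 / (1 - β) < γ) {h : α → ℝ}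
    (hh : Tendsto h l (𝓝[>] 0)) (hx : x =O[l] fun _ => (1 : ℝ)) :
    Tendsto (fun a => rescaledDeriv b b' (h a ^ (-γ)) (x a) * (-γ * h a ^ (-γ - 1))) l (𝓝 0) := by
  have hγ0 : 0 < γ := (one_div_pos.2 (sub_pos.2 hβ)).trans hγ
  have hy : Tendsto (fun a => h a ^ (-γ)) l atTop :=
    (tendsto_rpow_neg_nhdsGT_zero (neg_lt_zero.2 hγ0)).comp hh
  have hdy : (fun a => -γ * h a ^ (-γ - 1)) =O[l] fun a => (h a ^ (-γ)) ^ (1 + 1 / γ) := by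
    refine ((isBigO_refl _ l).const_mul_left (-γ)).trans_eventuallyEq ?_
    filter_upwards [hh.eventually self_mem_nhdsWithin] with a ha
    rw [← Real.rpow_mul (le_of_lt ha)]
    congr 1
    field_simp
    ring
  refine tendsto_zero_of_isBigO_rpow hy ?_
    (isBigO_mul_rpow_comp hy (hb.isBigO_rescaledDeriv hβ hy hx) hdy)
  linarith [(one_div_lt (sub_pos.2 hβ) hγ0).1 hγ]

lemma eventually_mul_add_pos (hβ : β < 1) (hy : Tendsto y l atTop)
    (hx : x =O[l] fun _ => (1 : ℝ)) : ∀ᶠ a in l, 0 < b (y a) * x a + y a :=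
  ((hb.isEquivalent_mul_add hβ hy hx).symm.tendsto_atTop hy).eventually_gt_atTop 0

lemma contDiffAt_extendedRescaled_of_fst_nonpos (hβ : β < 1) (hγ : 1 / (1 - β) < γ) {p : ℝ × ℝ}
    (hp : p.1 ≤ 0) : ContDiffAt ℝ 1 (extendedRescaled γ b) p := by
  have hγ0 : 0 < γ := (one_div_pos.2 (sub_pos.2 hβ)).trans hγ
  have hy (x : ℝ) : Tendsto (fun q : ℝ × ℝ => q.1 ^ (-γ)) (𝓝[>] 0 ×ˢ 𝓝 x) atTop :=
    (tendsto_rpow_neg_nhdsGT_zero (neg_lt_zero.2 hγ0)).comp tendsto_fst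
  have hx (x : ℝ) : (Prod.snd : ℝ × ℝ → ℝ) =O[𝓝[>] 0 ×ˢ 𝓝 x] fun _ => (1 : ℝ) :=
    tendsto_snd.isBigO_one ℝ
  have hnear (x : ℝ) : ∀ᶠ q in 𝓝[>] (0 : ℝ) ×ˢ 𝓝 x,
      0 < q.1 ∧ 0 < b (q.1 ^ (-γ)) * q.2 + q.1 ^ (-γ) :=
    (tendsto_fst.eventually self_mem_nhdsWithin).and (hb.eventually_mul_add_pos hβ (hy x) (hx x))
  refine contDiffAt_one_of_fst_nonpos (c := 1) (fun q hq => if_pos hq)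
    (fun x => (hnear x).mono fun q hq => hb.contDiffAt_extendedRescaled hq.1 hq.2)
    (fun x => ?_) (fun x => ?_) hp
  · exact (hb.tendsto_rescaled hβ (hy x) (hx x)).congr'
      ((hnear x).mono fun q hq => (extendedRescaled_eventuallyEq hq.1).eq_of_nhds.symm)
  · have hfderiv := ((hb.tendsto_rescaledDeriv_rpow hβ hγ tendsto_fst (hx x)).smul_const
      (ContinuousLinearMap.fst ℝ ℝ ℝ)).add ((hb.tendsto_deriv_mul_add hβ (hy x) (hx x)).smul_const
      (ContinuousLinearMap.snd ℝ ℝ ℝ))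
    rw [zero_smul, zero_smul, add_zero] at hfderiv
    exact hfderiv.congr' ((hnear x).mono fun q hq =>
      ((hb.hasFDerivAt_rescaled_rpow hq.1 hq.2).congr_of_eventuallyEq
        (extendedRescaled_eventuallyEq hq.1)).fderiv.symm)

end HasPowerGrowth

theorem stmt_17_general {β γ : ℝ} {b b' b'' : ℝ → ℝ} (hb : HasPowerGrowth β b b' b'')
    (hβ : β < 1) (hγ : 1 / (1 - β) < γ) (x : ℝ) :
    (∀ᶠ h in 𝓝[>] (0 : ℝ), -(h ^ (-γ)) / b (h ^ (-γ)) < x) ∧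
    Tendsto (fun h : ℝ => b' (b (h ^ (-γ)) * x + h ^ (-γ))) (𝓝[>] 0) (𝓝 0) ∧
    (∃ Fh : ℝ → ℝ,
      (∀ᶠ h in 𝓝[>] (0 : ℝ), HasDerivAt (fun h' : ℝ => rescaled b (h' ^ (-γ)) x) (Fh h) h) ∧
      Tendsto Fh (𝓝[>] 0) (𝓝 0)) ∧
    ContDiffOn ℝ 1 (extendedRescaled γ b)
      {p : ℝ × ℝ | p.1 ≤ 0 ∨ (0 < p.1 ∧ -(p.1 ^ (-γ)) / b (p.1 ^ (-γ)) < p.2)} := by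
  have hγ0 : 0 < γ := (one_div_pos.2 (sub_pos.2 hβ)).trans hγ
  have hy := tendsto_rpow_neg_nhdsGT_zero (neg_lt_zero.2 hγ0)
  have hx : (fun _ : ℝ => x) =O[𝓝[>] 0] fun _ => (1 : ℝ) := isBigO_const_const x one_ne_zero _
  have hnear : ∀ᶠ h in 𝓝[>] (0 : ℝ), 0 < h ∧ 0 < b (h ^ (-γ)) * x + h ^ (-γ) :=
    eventually_mem_nhdsWithin.and (hb.eventually_mul_add_pos hβ hy hx)
  refine ⟨hnear.mono fun h hh => (hb.neg_div_lt_iff (Real.rpow_pos_of_pos hh.1 _)).2 hh.2,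
    hb.tendsto_deriv_mul_add hβ hy hx,
    ⟨_, hnear.mono fun h hh => hb.hasDerivAt_rescaled_rpow hh.1 hh.2,
      hb.tendsto_rescaledDeriv_rpow hβ hγ tendsto_id hx⟩, ?_⟩
  rintro p (hp | ⟨hp, hpx⟩)
  · exact (hb.contDiffAt_extendedRescaled_of_fst_nonpos hβ hγ hp).contDiffWithinAt
  · exact (hb.contDiffAt_extendedRescaled hp
      ((hb.neg_div_lt_iff (Real.rpow_pos_of_pos hp _)).1 hpx)).contDiffWithinAt

/-- Under (D₂⁺), with `γ ≥ 2/(1-β)` and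
`F(h,x) := b(b(h^{-γ})·x + h^{-γ})/b(h^{-γ})` for `h > 0` and `x > x_h := -h^{-γ}/b(h^{-γ})`:
for every fixed `x ∈ ℝ`, eventually `x > x_h` as `h → 0⁺`;
`∂ₓF(h,x) = b′(b(h^{-γ})·x + h^{-γ}) → 0` as `h → 0⁺`;
`∂_h F(h,x) → 0` as `h → 0⁺`; and consequently `F`, extended by `1` for `h ≤ 0`, is `C¹`
on `{(h,x) : h ≤ 0, or h > 0 and x > x_h}`. -/
theorem stmt_17 (β ainf γ : ℝ)
    (hβ : -1 < β) (hβ1 : β < 1) (ha : 0 < ainf) (hγ : 2 / (1 - β) ≤ γ)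
    (b b' f f' f'' : ℝ → ℝ)
    (hbpos : ∀ x : ℝ, 0 < x → 0 < b x)
    (hbnonneg : ∀ x : ℝ, 0 ≤ x → 0 ≤ b x)
    (hbC2 : ContDiffOn ℝ 2 b (Set.Ioi 0))
    (hb' : ∀ x : ℝ, 0 < x → HasDerivAt b (b' x) x)
    (hbf : ∀ x : ℝ, 0 < x → b x = ainf * x ^ β + f x)
    (hf' : ∀ x : ℝ, 0 < x → HasDerivAt f (f' x) x)
    (hf'' : ∀ x : ℝ, 0 < x → HasDerivAt f' (f'' x) x)
    (hfo : Tendsto (fun x : ℝ => f x / x ^ ((3 * β - 1) / 2)) atTop (𝓝 0))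
    (hf'o : Tendsto (fun x : ℝ => f' x / x ^ ((3 * β - 3) / 2)) atTop (𝓝 0))
    (hf''o : Tendsto (fun x : ℝ => f'' x / x ^ ((3 * β - 5) / 2)) atTop (𝓝 0))
    (x : ℝ) :
    -- for all sufficiently small `h > 0`, `x > x_h`
    (∀ᶠ h in 𝓝[>] (0:ℝ), -(h ^ (-γ)) / b (h ^ (-γ)) < x) ∧
    -- (i) `∂ₓF(h,x) = b′(b(h^{-γ})·x + h^{-γ}) → 0` as `h → 0⁺`
    Tendsto (fun h : ℝ => b' (b (h ^ (-γ)) * x + h ^ (-γ))) (𝓝[>] 0) (𝓝 0) ∧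
    -- (ii) `∂_h F(h,x) → 0` as `h → 0⁺`
    (∃ Fh : ℝ → ℝ,
      (∀ᶠ h in 𝓝[>] (0:ℝ),
        HasDerivAt (fun h' : ℝ => b (b (h' ^ (-γ)) * x + h' ^ (-γ)) / b (h' ^ (-γ)))
          (Fh h) h) ∧
      Tendsto Fh (𝓝[>] 0) (𝓝 0)) ∧
    -- consequently the extended `F` is `C¹` on `{h ≤ 0} ∪ {h > 0, x' > x_h}`
    ContDiffOn ℝ 1
      (fun p : ℝ × ℝ =>
        if p.1 ≤ 0 then 1
        else b (b (p.1 ^ (-γ)) * p.2 + p.1 ^ (-γ)) / b (p.1 ^ (-γ)))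
      {p : ℝ × ℝ | p.1 ≤ 0 ∨ (0 < p.1 ∧ -(p.1 ^ (-γ)) / b (p.1 ^ (-γ)) < p.2)} :=
  stmt_17_general (.of_eq_rpow_add ha.ne' hbpos hb' hbf hf' hf''
    (isLittleO_rpow_of_tendsto_div (by linarith) hfo)
    (isLittleO_rpow_of_tendsto_div (by linarith) hf'o).isBigO
    (isLittleO_rpow_of_tendsto_div (by linarith) hf''o).isBigO)
    hβ1 ((div_lt_div_of_pos_right one_lt_two (sub_pos.2 hβ1)).trans_le hγ) x
end

section
/- Assume (D₂⁺) and fix γ ≥ 2/(1−β). Let σ : D → ℝ^{(1+d)×(1+d)} be bounded and continuously differentiable, and suppose there exists ε > 0 such that for all indices i, j, k ∈ {0,1,…,d}, sup_{u ∈ 𝔹^d} x^{β+ε}·|∂_i σ_{j,k}(x, b(x)·u)| → 0 as x → ∞ (Assumption (S), where ∂₀ = ∂_x and ∂_i = ∂_{y_i} for i ≥ 1). Then for every fixed x ∈ ℝ and y ∈ ℝ^d with |y| < 1, and all indices i, j, k ∈ {0,1,…,d}, lim_{h→0⁺} b(h^{−γ})·|∂_i σ_{j,k}( b(h^{−γ})·x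 + h^{−γ}, b(h^{−γ})·y )| = 0. (For each such fixed (x,y) the argument point lies in D for all sufficiently small h > 0.) -/
open Filter Topology

/-!
Since `b` is asymptotic to `a∞ · s ^ β` with `β < 1`, it varies slowly on its own scale:
`b (s + t * b s) ∼ b s`. Write `s = h ^ (-γ)` and `z = b s * x + s`. The point `(z, b s • y)` is
`(z, b z • u)` with `u = (b s / b z) • y`, and `‖u‖ ≤ 1` eventually because `‖y‖ < 1`. Hence
assumption (S) controls the derivative there, and replacing the prefactor `b z` by the comparable
`b s` does not affect the limit.
-/

open Asymptotics Metric

section Asymptotics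

variable {α : Type*} {l : Filter α}

theorem isEquivalent_rpow_const {u v : α → ℝ} (huv : u ~[l] v) (hv : ∀ᶠ x in l, 0 ≤ v x)
    (r : ℝ) : (fun x ↦ u x ^ r) ~[l] fun x ↦ v x ^ r := by
  obtain ⟨φ, hφ, huφ⟩ := huv.exists_eq_mul
  refine isEquivalent_iff_exists_eq_mul.2 ⟨fun x ↦ φ x ^ r, ?_, ?_⟩
  · simpa only [Real.one_rpow] using hφ.rpow_const (p := r) (Or.inl one_ne_zero)
  · filter_upwards [huφ, hv, hφ.eventually_const_lt one_pos] with x hux hvx hφx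
    simp only [hux, Pi.mul_apply, Real.mul_rpow hφx.le hvx]

theorem isBigO_rpow_rpow_atTop {p q : ℝ} (hpq : p ≤ q) :
    (fun s : ℝ ↦ s ^ p) =O[atTop] fun s ↦ s ^ q := by
  refine IsBigO.of_norm_eventuallyLE ?_
  filter_upwards [eventually_ge_atTop 1] with s hs
  rw [Real.norm_of_nonneg (Real.rpow_nonneg (zero_le_one.trans hs) p)]
  exact Real.rpow_le_rpow_of_exponent_le hs hpq

theorem isLittleO_rpow_rpow_atTop {p q : ℝ} (hpq : p < q) :
    (fun s : ℝ ↦ s ^ p) =o[atTop] fun s ↦ s ^ q := by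
  have hdiv : Tendsto (fun s : ℝ ↦ s ^ (-(q - p))) atTop (𝓝 0) :=
    tendsto_rpow_neg_atTop (sub_pos.2 hpq)
  refine isLittleO_of_tendsto' ?_ (hdiv.congr' ?_)
  · filter_upwards [eventually_gt_atTop 0] with s hs hs₀
    exact absurd hs₀ (Real.rpow_pos_of_pos hs q).ne'
  · filter_upwards [eventually_gt_atTop 0] with s hs
    rw [neg_sub, Real.rpow_sub hs]

theorem isLittleO_rpow_of_tendsto_div_rpow {f : ℝ → ℝ} {p q : ℝ} (hpq : p ≤ q)
    (hf : Tendsto (fun s ↦ f s / s ^ p) atTop (𝓝 0)) : f =o[atTop] fun s ↦ s ^ q := by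
  refine (isLittleO_of_tendsto' ?_ hf).trans_isBigO (isBigO_rpow_rpow_atTop hpq)
  filter_upwards [eventually_gt_atTop 0] with s hs hs₀
  exact absurd hs₀ (Real.rpow_pos_of_pos hs p).ne'

theorem isEquivalent_const_mul_of_eventuallyEq_add {c : ℝ} (hc : c ≠ 0) {u v w : α → ℝ}
    (hu : ∀ᶠ x in l, u x = c * v x + w x) (hw : w =o[l] v) : u ~[l] fun x ↦ c * v x := by
  refine (hw.const_mul_right hc).congr' ?_ .rfl
  filter_upwards [hu] with x hx
  simp only [Pi.sub_apply, hx, add_sub_cancel_left]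

theorem isEquivalent_mul_const_add {u v : α → ℝ} (huv : u =o[l] v) (t : ℝ) :
    (fun x ↦ u x * t + v x) ~[l] v := by
  simpa only [mul_comm] using! (huv.const_mul_left t).add_isEquivalent IsEquivalent.refl

end Asymptotics

section UniformConvergence

variable {α X : Type*} {l : Filter α} {S : Set X}

theorem tendstoUniformlyOn_zero_of_eventually_le {φ : α → X → ℝ}
    (hφ₀ : ∀ᶠ a in l, ∀ u ∈ S, 0 ≤ φ a u)
    (hφ : ∀ δ > 0, ∀ᶠ a in l, ∀ u ∈ S, φ a u ≤ δ) :
    TendstoUniformlyOn φ (fun _ ↦ 0) l S := by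
  refine Metric.tendstoUniformlyOn_iff.2 fun δ hδ ↦ ?_
  filter_upwards [hφ₀, hφ (δ / 2) (half_pos hδ)] with a ha₀ ha u hu
  rw [dist_zero_left, Real.norm_of_nonneg (ha₀ u hu)]
  exact (ha u hu).trans_lt (half_lt_self hδ)

theorem tendstoUniformlyOn_mul_zero_of_isBigO {b c : α → ℝ} (hbc : b =O[l] c) {φ : α → X → ℝ}
    (hφ : TendstoUniformlyOn (fun a u ↦ c a * φ a u) (fun _ ↦ 0) l S) :
    TendstoUniformlyOn (fun a u ↦ b a * φ a u) (fun _ ↦ 0) l S :=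
  tendsto_prod_principal_iff.1 <|
    ((hbc.comp_tendsto tendsto_fst).mul (isBigO_refl (fun p : α × X ↦ φ p.1 p.2) _)).trans_tendsto
      (tendsto_prod_principal_iff.2 hφ)

theorem tendstoUniformlyOn_mul_zero_of_rpow_mul_le {b : ℝ → ℝ} {p : ℝ}
    (hb : b =O[atTop] fun s ↦ s ^ p) {φ : ℝ → X → ℝ} (hφ₀ : ∀ s, ∀ u ∈ S, 0 ≤ φ s u)
    (hφ : ∀ δ > 0, ∃ R, ∀ s ≥ R, ∀ u ∈ S, s ^ p * φ s u ≤ δ) :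
    TendstoUniformlyOn (fun s u ↦ b s * φ s u) (fun _ ↦ 0) atTop S := by
  refine tendstoUniformlyOn_mul_zero_of_isBigO hb
    (tendstoUniformlyOn_zero_of_eventually_le ?_ fun δ hδ ↦ eventually_atTop.2 (hφ δ hδ))
  filter_upwards [eventually_ge_atTop 0] with s hs u hu
  exact mul_nonneg (Real.rpow_nonneg hs p) (hφ₀ s u hu)

end UniformConvergence

/-- Beurling slow variation at infinity (Bingham–Goldie–Teugels, *Regular variation*, §2.11): the
displacement `t * b s`, on the scale of `b` itself, does not change `b` to leading order.
Eventual positivity is part of the notion; measurability is not required. -/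
structure BeurlingSlowlyVarying (b : ℝ → ℝ) : Prop where
  eventually_pos : ∀ᶠ s in atTop, 0 < b s
  isLittleO_id : b =o[atTop] (id : ℝ → ℝ)
  isEquivalent_shift (t : ℝ) : (fun s ↦ b (b s * t + s)) ~[atTop] b

namespace BeurlingSlowlyVarying

theorem of_isEquivalent_rpow {a q : ℝ} (ha : 0 < a) (hq : q < 1) {b : ℝ → ℝ}
    (hb : b ~[atTop] fun s ↦ a * s ^ q) : BeurlingSlowlyVarying b := by
  have hrpow_id : (fun s : ℝ ↦ s ^ q) =o[atTop] (id : ℝ → ℝ) := by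
    simpa only [Real.rpow_one] using! isLittleO_rpow_rpow_atTop hq
  have hb_id : b =o[atTop] (id : ℝ → ℝ) := hb.trans_isLittleO (hrpow_id.const_mul_left a)
  refine ⟨hb.eventually_pos ?_, hb_id, fun t ↦ ?_⟩
  · filter_upwards [eventually_gt_atTop 0] with s hs
    exact mul_pos ha (Real.rpow_pos_of_pos hs q)
  · have hz : (fun s ↦ b s * t + s) ~[atTop] (id : ℝ → ℝ) := isEquivalent_mul_const_add hb_id t
    have hz_rpow : (fun s ↦ a * (b s * t + s) ^ q) ~[atTop] fun s ↦ a * s ^ q :=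
      IsEquivalent.refl.mul (isEquivalent_rpow_const hz (eventually_ge_atTop 0) q)
    exact ((hb.comp_tendsto (hz.symm.tendsto_atTop tendsto_id)).trans hz_rpow).trans hb.symm

variable {b : ℝ → ℝ}

theorem tendsto_shift_atTop (hb : BeurlingSlowlyVarying b) (t : ℝ) :
    Tendsto (fun s ↦ b s * t + s) atTop atTop :=
  (isEquivalent_mul_const_add hb.isLittleO_id t).symm.tendsto_atTop tendsto_id

theorem eventually_mul_le_shift (hb : BeurlingSlowlyVarying b) (t : ℝ) {r : ℝ} (hr : r < 1) :
    ∀ᶠ s in atTop, r * b s ≤ b (b s * t + s) := by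
  filter_upwards [hb.eventually_pos,
    (hb.isEquivalent_shift t).isLittleO.bound (sub_pos.2 hr)] with s hs hdiff
  rw [Pi.sub_apply, Real.norm_of_nonneg hs.le] at hdiff
  linarith [neg_le_of_abs_le hdiff]

variable {E : Type*} [SeminormedAddCommGroup E] [NormedSpace ℝ E]

theorem eventually_norm_smul_le_shift (hb : BeurlingSlowlyVarying b) (t : ℝ) {y : E}
    (hy : ‖y‖ < 1) : ∀ᶠ s in atTop, ‖b s • y‖ ≤ b (b s * t + s) := by
  filter_upwards [hb.eventually_pos, hb.eventually_mul_le_shift t hy] with s hs hle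
  rwa [norm_smul, Real.norm_of_nonneg hs.le, mul_comm]

theorem tendsto_mul_shift (hb : BeurlingSlowlyVarying b) {g : ℝ → E → ℝ}
    (hg : TendstoUniformlyOn (fun s u ↦ b s * g s (b s • u)) (fun _ ↦ 0) atTop
      (closedBall 0 1)) (t : ℝ) {y : E} (hy : ‖y‖ < 1) :
    Tendsto (fun s ↦ b s * g (b s * t + s) (b s • y)) atTop (𝓝 0) := by
  have hz := hb.tendsto_shift_atTop t
  have hbz : ∀ᶠ s in atTop, 0 < b (b s * t + s) := hz.eventually hb.eventually_pos
  have hu : ∀ᶠ s in atTop, (b (b s * t + s))⁻¹ • b s • y ∈ closedBall (0 : E) 1 := by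
    filter_upwards [hbz, hb.eventually_norm_smul_le_shift t hy] with s hs hle
    rw [mem_closedBall_zero_iff, norm_smul, norm_inv, Real.norm_of_nonneg hs.le]
    exact inv_mul_le_one_of_le₀ hle hs.le
  have hlim : Tendsto (fun s ↦ b (b s * t + s) * g (b s * t + s) (b s • y)) atTop (𝓝 0) := by
    refine ((tendsto_prod_principal_iff.2 hg).comp
      (hz.prodMk (tendsto_principal.2 hu))).congr' ?_
    filter_upwards [hbz] with s hs
    simp only [Function.comp_apply, Function.HasUncurry.uncurry, id, smul_inv_smul₀ hs.ne']
  exact ((hb.isEquivalent_shift t).isBigO_symm.mul (isBigO_refl _ _)).trans_tendsto hlim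

end BeurlingSlowlyVarying

theorem stmt_18_general {E : Type*} [SeminormedAddCommGroup E] [NormedSpace ℝ E]
    {b : ℝ → ℝ} (hb : BeurlingSlowlyVarying b) {g : ℝ → E → ℝ}
    (hg : TendstoUniformlyOn (fun s u ↦ b s * g s (b s • u)) (fun _ ↦ 0) atTop
      (closedBall 0 1)) {γ : ℝ} (hγ : 0 < γ) (x : ℝ) {y : E} (hy : ‖y‖ < 1) :
    (∀ᶠ h in 𝓝[>] (0 : ℝ), 0 ≤ b (h ^ (-γ)) * x + h ^ (-γ) ∧
      ‖b (h ^ (-γ)) • y‖ ≤ b (b (h ^ (-γ)) * x + h ^ (-γ))) ∧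
    Tendsto (fun h : ℝ ↦
        b (h ^ (-γ)) * g (b (h ^ (-γ)) * x + h ^ (-γ)) (b (h ^ (-γ)) • y))
      (𝓝[>] 0) (𝓝 0) := by
  have hh : Tendsto (fun h : ℝ ↦ h ^ (-γ)) (𝓝[>] 0) atTop :=
    tendsto_rpow_neg_nhdsGT_zero (neg_neg_of_pos hγ)
  exact ⟨hh.eventually (((hb.tendsto_shift_atTop x).eventually_ge_atTop 0).and
    (hb.eventually_norm_smul_le_shift x hy)), (hb.tendsto_mul_shift hg x hy).comp hh⟩

/-- Under (D₂⁺) and assumption (S) on the partial derivatives of the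
diffusion matrix `σ`, for every fixed `x ∈ ℝ` and `y` with `‖y‖ < 1`, the rescaled
partial derivatives vanish in the limit:
`b(h^{-γ})·|∂ᵢσⱼₖ(b(h^{-γ})·x + h^{-γ}, b(h^{-γ})·y)| → 0` as `h → 0⁺`
(and the argument point lies in `D` for all sufficiently small `h > 0`). -/
theorem stmt_18 (d : ℕ) (hd : 1 ≤ d) (β ainf γ ε : ℝ)
    (hβ : -1 < β) (hβ1 : β < 1) (ha : 0 < ainf) (hγ : 2 / (1 - β) ≤ γ) (hε : 0 < ε)
    (b f f' f'' : ℝ → ℝ)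
    (hbpos : ∀ x : ℝ, 0 < x → 0 < b x)
    (hbnonneg : ∀ x : ℝ, 0 ≤ x → 0 ≤ b x)
    (hbC2 : ContDiffOn ℝ 2 b (Set.Ioi 0))
    (hbf : ∀ x : ℝ, 0 < x → b x = ainf * x ^ β + f x)
    (hf' : ∀ x : ℝ, 0 < x → HasDerivAt f (f' x) x)
    (hf'' : ∀ x : ℝ, 0 < x → HasDerivAt f' (f'' x) x)
    (hfo : Tendsto (fun x : ℝ => f x / x ^ ((3 * β - 1) / 2)) atTop (𝓝 0))
    (hf'o : Tendsto (fun x : ℝ => f' x / x ^ ((3 * β - 3) / 2)) atTop (𝓝 0))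
    (hf''o : Tendsto (fun x : ℝ => f'' x / x ^ ((3 * β - 5) / 2)) atTop (𝓝 0))
    -- the diffusion matrix `σ`, bounded and continuously differentiable, and its
    -- partial derivatives `Dσ i = ∂ᵢσ` (`∂₀ = ∂ₓ`, `∂ᵢ = ∂_{yᵢ}` for `i ≥ 1`)
    (σm : ℝ → EuclideanSpace ℝ (Fin d) → Matrix (Fin (d + 1)) (Fin (d + 1)) ℝ)
    (Dσ : Fin (d + 1) → ℝ → EuclideanSpace ℝ (Fin d) →
      Matrix (Fin (d + 1)) (Fin (d + 1)) ℝ)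
    (hσbdd : ∃ K : ℝ, ∀ x : ℝ, ∀ y : EuclideanSpace ℝ (Fin d), ‖y‖ ≤ b x →
      ∀ j k : Fin (d + 1), |σm x y j k| ≤ K)
    (hD0 : ∀ (x : ℝ) (y : EuclideanSpace ℝ (Fin d)) (j k : Fin (d + 1)),
      HasDerivAt (fun x' : ℝ => σm x' y j k) (Dσ 0 x y j k) x)
    (hDi : ∀ (i : Fin d) (x : ℝ) (y : EuclideanSpace ℝ (Fin d)) (j k : Fin (d + 1)),
      HasDerivAt (fun t : ℝ => σm x (y + t • EuclideanSpace.single i (1:ℝ)) j k)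
        (Dσ i.succ x y j k) 0)
    (hDcont : ∀ (i j k : Fin (d + 1)),
      Continuous fun p : ℝ × EuclideanSpace ℝ (Fin d) => Dσ i p.1 p.2 j k)
    -- Assumption (S)
    (hS : ∀ (i j k : Fin (d + 1)), ∀ δ : ℝ, 0 < δ → ∃ X : ℝ, ∀ x ≥ X,
      ∀ u : EuclideanSpace ℝ (Fin d), ‖u‖ ≤ 1 →
        x ^ (β + ε) * |Dσ i x (b x • u) j k| ≤ δ)
    (x : ℝ) (y : EuclideanSpace ℝ (Fin d)) (hy : ‖y‖ < 1) :
    (∀ᶠ h in 𝓝[>] (0:ℝ),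
        0 ≤ b (h ^ (-γ)) * x + h ^ (-γ) ∧
        ‖b (h ^ (-γ)) • y‖ ≤ b (b (h ^ (-γ)) * x + h ^ (-γ))) ∧
    ∀ i j k : Fin (d + 1),
      Tendsto (fun h : ℝ =>
          b (h ^ (-γ)) *
            |Dσ i (b (h ^ (-γ)) * x + h ^ (-γ)) (b (h ^ (-γ)) • y) j k|)
        (𝓝[>] 0) (𝓝 0) := by
  have hγ₀ : 0 < γ := (div_pos two_pos (sub_pos.2 hβ1)).trans_le hγ
  have hb : b ~[atTop] fun s ↦ ainf * s ^ β :=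
    isEquivalent_const_mul_of_eventuallyEq_add ha.ne' ((eventually_gt_atTop 0).mono hbf)
      (isLittleO_rpow_of_tendsto_div_rpow (by linarith) hfo)
  have hb_rpow : b =O[atTop] fun s ↦ s ^ (β + ε) :=
    hb.isBigO.trans ((isBigO_rpow_rpow_atTop (by linarith)).const_mul_left ainf)
  have hDσ (i j k : Fin (d + 1)) :
      TendstoUniformlyOn (fun s u ↦ b s * |Dσ i s (b s • u) j k|) (fun _ ↦ 0) atTop
        (closedBall 0 1) :=
    tendstoUniformlyOn_mul_zero_of_rpow_mul_le hb_rpow (fun _ _ _ ↦ abs_nonneg _)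
      (by simpa only [mem_closedBall_zero_iff] using hS i j k)
  have hlim (i j k : Fin (d + 1)) := stmt_18_general (g := fun s v ↦ |Dσ i s v j k|)
    (.of_isEquivalent_rpow ha hβ1 hb) (hDσ i j k) hγ₀ x hy
  exact ⟨(hlim 0 0 0).1, fun i j k ↦ (hlim i j k).2⟩
end

section
/- Fix β ∈ (−1,1) and c₁ > 0, and let x : (0,∞) → ℝ satisfy x(t)/t^{1/(1+β)} → c₁ as t → ∞. Then t^{β/(1+β)}·( x(t) − c₁·t^{1/(1+β)} ) − (t+1)^{β/(1+β)}·( x(t) − c₁·(t+1)^{1/(1+β)} ) → c₁/(1+β) as t → ∞. In particular, since c₁/(1+β) ≠ 0, it is impossible that both t^{β/(1+β)}·( x(t) − c₁·t^{1/(1+β)} ) → 0 and (t+1)^{β/(1+β)}·( x(t) − c₁·(t+1)^{1/(1+β)} ) → 0 as t → ∞. -/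
open Filter Topology

/-!
Put `a = 1 / (1 + β)` and `b = β / (1 + β)`, so that `a + b = 1`. In the difference of the two
recentred quantities at times `t` and `t + h` the centring terms contribute exactly `c * h`, and
what remains is `-x t * ((t + h) ^ b - t ^ b)`. Here `x t ~ c * t ^ a`, while
`t ^ a * ((t + h) ^ b - t ^ b) = t * ((1 + h / t) ^ b - 1)` is a difference quotient of `s ↦ s ^ b`
at `1` and tends to `b * h`. The limit is thus `c * h - c * b * h = c * a * h`; take `h = 1`.
-/

theorem rpow_mul_rpow_of_add_eq_one {a b : ℝ} (hab : a + b = 1) {s : ℝ} (hs : 0 < s) :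
    s ^ a * s ^ b = s := by
  rw [← Real.rpow_add hs, hab, Real.rpow_one]

theorem tendsto_rpow_mul_add_rpow_sub_rpow {a b : ℝ} (hab : a + b = 1) (h : ℝ) :
    Tendsto (fun t : ℝ => t ^ a * ((t + h) ^ b - t ^ b)) atTop (𝓝 (b * h)) := by
  have hderiv : HasDerivAt (fun s : ℝ => s ^ b) b 1 := by
    simpa using Real.hasDerivAt_rpow_const (x := 1) (p := b) (Or.inl one_ne_zero)
  have hslope : Tendsto (fun t : ℝ => t * ((1 + t⁻¹ * h) ^ b - 1)) atTop (𝓝 (b * h)) := by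
    simpa [mul_comm] using hderiv.hasFDerivAt.lim_real h
  refine hslope.congr' ?_
  filter_upwards [eventually_gt_atTop 0, eventually_ge_atTop (-h)] with t ht hth
  have hscale : t ^ b * (1 + t⁻¹ * h) ^ b = (t + h) ^ b := by
    have hfactor : 1 + t⁻¹ * h = (t + h) / t := by field_simp
    rw [hfactor, Real.div_rpow (neg_le_iff_add_nonneg.mp hth) ht.le,
      mul_div_cancel₀ _ (Real.rpow_pos_of_pos ht b).ne']
  calc t * ((1 + t⁻¹ * h) ^ b - 1)
      = t ^ a * t ^ b * ((1 + t⁻¹ * h) ^ b - 1) := by rw [rpow_mul_rpow_of_add_eq_one hab ht]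
    _ = t ^ a * (t ^ b * (1 + t⁻¹ * h) ^ b - t ^ b) := by ring
    _ = t ^ a * ((t + h) ^ b - t ^ b) := by rw [hscale]

theorem tendsto_recentred_sub_recentred_add {a b c : ℝ} (hab : a + b = 1) (h : ℝ) {x : ℝ → ℝ}
    (hx : Tendsto (fun t => x t / t ^ a) atTop (𝓝 c)) :
    Tendsto (fun t => t ^ b * (x t - c * t ^ a) - (t + h) ^ b * (x t - c * (t + h) ^ a))
      atTop (𝓝 (c * a * h)) := by
  have hmain : Tendsto (fun t => c * h - x t / t ^ a * (t ^ a * ((t + h) ^ b - t ^ b)))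
      atTop (𝓝 (c * h - c * (b * h))) :=
    (hx.mul (tendsto_rpow_mul_add_rpow_sub_rpow hab h)).const_sub (c * h)
  have hlimit : c * h - c * (b * h) = c * a * h := by linear_combination -c * h * hab
  rw [hlimit] at hmain
  refine hmain.congr' ?_
  filter_upwards [eventually_gt_atTop 0, eventually_gt_atTop (-h)] with t ht hth
  rw [← mul_assoc, div_mul_cancel₀ _ (Real.rpow_pos_of_pos ht a).ne']
  linear_combination c * rpow_mul_rpow_of_add_eq_one hab ht -
    c * rpow_mul_rpow_of_add_eq_one hab (neg_lt_iff_pos_add.mp hth)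

theorem stmt_19_general {β c₁ : ℝ} (hβ : β ≠ -1) (hc₁ : c₁ ≠ 0) {x : ℝ → ℝ}
    (hx : Tendsto (fun t : ℝ => x t / t ^ (1 / (1 + β))) atTop (𝓝 c₁)) :
    Tendsto (fun t : ℝ =>
        t ^ (β / (1 + β)) * (x t - c₁ * t ^ (1 / (1 + β)))
          - (t + 1) ^ (β / (1 + β)) * (x t - c₁ * (t + 1) ^ (1 / (1 + β))))
      atTop (𝓝 (c₁ / (1 + β))) ∧
    c₁ / (1 + β) ≠ 0 ∧
    ¬ (Tendsto (fun t : ℝ => t ^ (β / (1 + β)) * (x t - c₁ * t ^ (1 / (1 + β))))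
          atTop (𝓝 0) ∧
        Tendsto (fun t : ℝ =>
            (t + 1) ^ (β / (1 + β)) * (x t - c₁ * (t + 1) ^ (1 / (1 + β))))
          atTop (𝓝 0)) := by
  have hβ' : 1 + β ≠ 0 := fun h => hβ (by linarith)
  have hexp : 1 / (1 + β) + β / (1 + β) = 1 := by rw [← add_div, div_self hβ']
  have hlim := tendsto_recentred_sub_recentred_add hexp 1 hx
  rw [mul_one, mul_one_div] at hlim
  have hne : c₁ / (1 + β) ≠ 0 := div_ne_zero hc₁ hβ'
  refine ⟨hlim, hne, fun ⟨hzero, hzero_shift⟩ => hne ?_⟩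
  exact tendsto_nhds_unique hlim (by simpa only [sub_zero] using hzero.sub hzero_shift)

/-- If `x(t)/t^{1/(1+β)} → c₁ > 0` with `β ∈ (-1,1)`, then
`t^{β/(1+β)}(x(t) - c₁ t^{1/(1+β)}) - (t+1)^{β/(1+β)}(x(t) - c₁ (t+1)^{1/(1+β)})
  → c₁/(1+β) ≠ 0`;
in particular the two recentred quantities cannot both tend to `0`. -/
theorem stmt_19 (β c₁ : ℝ) (hβ : -1 < β) (hβ1 : β < 1) (hc₁ : 0 < c₁)
    (x : ℝ → ℝ)
    (hx : Tendsto (fun t : ℝ => x t / t ^ (1 / (1 + β))) atTop (𝓝 c₁)) :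
    Tendsto (fun t : ℝ =>
        t ^ (β / (1 + β)) * (x t - c₁ * t ^ (1 / (1 + β)))
          - (t + 1) ^ (β / (1 + β)) * (x t - c₁ * (t + 1) ^ (1 / (1 + β))))
      atTop (𝓝 (c₁ / (1 + β))) ∧
    c₁ / (1 + β) ≠ 0 ∧
    ¬ (Tendsto (fun t : ℝ => t ^ (β / (1 + β)) * (x t - c₁ * t ^ (1 / (1 + β))))
          atTop (𝓝 0) ∧
        Tendsto (fun t : ℝ =>
            (t + 1) ^ (β / (1 + β)) * (x t - c₁ * (t + 1) ^ (1 / (1 + β))))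
          atTop (𝓝 0)) :=
  stmt_19_general hβ.ne' hc₁.ne' hx
end
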